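/- Let d ≥ 3 and let Θ°_d = {(a,b,c) ∈ ℤ³ : a,b,c ≥ 1, a+b+c = d}. Let (E,F,G,H) and (E',F',G',H') be quadruples of flags in ℝ^d, each with the maximum span property. Suppose that X_{a,b,c}(E,F,G) = X_{a,b,c}(E',F',G') and X_{a,b,c}(E,H,F) = X_{a,b,c}(E',H',F') for all (a,b,c) ∈ Θ°_d, and Z_i(E,F,G,H) = Z_i(E',F',G',H') for all 0 < i < d. Then there exists g ∈ GL(d,ℝ) with g·E^(i) = E'^(i), g·F^(i) = F'^(i), g·G^(i) = G'^(i), and g·H^(i) = H'^(i) for all i. -/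

import Mathlib

noncomputable section

abbrev Vec (d : ℕ) : Type := Fin d → ℝ

/-- A complete flag in `ℝ^d`. -/
def IsFlag {d : ℕ} (F : ℕ → Submodule ℝ (Vec d)) : Prop :=
  Monotone F ∧ ∀ i, i ≤ d → Module.finrank ℝ (F i) = i

/-- The maximum span property for a tuple of flags. -/
def MaxSpan {d t : ℕ} (F : Fin t → ℕ → Submodule ℝ (Vec d)) : Prop :=
  ∀ a : Fin t → ℕ, (∀ j, a j ≤ d) →
    Module.finrank ℝ ↥(⨆ j, F j (a j)) = min (∑ j, a j) d

/-- The wedge product of the concatenated vectors, viewed as a real number via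
`⋀^d ℝ^d ≅ ℝ` (determinant in the standard basis); junk value `0` if the total
number of vectors is not `d`. -/
def wedgeDet {d n1 n2 n3 : ℕ} (u : Fin n1 → Vec d) (v : Fin n2 → Vec d)
    (w : Fin n3 → Vec d) : ℝ :=
  if h : n1 + n2 + n3 = d then
    (Matrix.of fun i j => (Fin.append (Fin.append u v) w) (Fin.cast h.symm j) i).det
  else 0

/-- A choice, for each `k ≤ d`, of a spanning `k`-tuple of vectors of the member
`F k` of a flag; equivalently a choice of a nonzero element of `⋀^k F^(k)`. -/
def ChoiceFor {d : ℕ} (F : ℕ → Submodule ℝ (Vec d)) (e : (k : ℕ) → Fin k → Vec d) : Prop :=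
  ∀ k, k ≤ d → Submodule.span ℝ (Set.range (e k)) = F k

/-- The `(a,b,c)`-triple ratio `X_{a,b,c}(E,F,G)` computed from choices. -/
def tripleRatio {d : ℕ} (a b c : ℕ) (e f g : (k : ℕ) → Fin k → Vec d) : ℝ :=
  (wedgeDet (e (a-1)) (f b) (g (c+1)) * wedgeDet (e a) (f (b+1)) (g (c-1)) *
   wedgeDet (e (a+1)) (f (b-1)) (g c)) /
  (wedgeDet (e (a+1)) (f b) (g (c-1)) * wedgeDet (e a) (f (b-1)) (g (c+1)) *
   wedgeDet (e (a-1)) (f (b+1)) (g c))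

/-- The `i`-th double ratio `Z_i(E,F,G,H)` computed from choices. -/
def doubleRatio {d : ℕ} (i : ℕ) (e g : (k : ℕ) → Fin k → Vec d) (f1 h1 : Vec d) : ℝ :=
  -((wedgeDet (e i) (g (d-i-1)) ![f1] * wedgeDet (e (i-1)) (g (d-i)) ![h1]) /
    (wedgeDet (e i) (g (d-i-1)) ![h1] * wedgeDet (e (i-1)) (g (d-i)) ![f1]))

/-!
Fix flags `E`, `F` and choices `e`, `f` in general position with `G`. The functionals
`x ↦ e^(a) ∧ f^(b) ∧ g^(c) ∧ x` with `a + b + c + 1 = d` have common kernel `G^(c)`, so the line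
`G^(c+1) / G^(c)` is determined by the ratios of the values they take on it. The triple ratio
`X_{a+1,b+1,c}` expresses the quotient of the values of the `(a, b+1)` and `(a+1, b)` functionals
in terms of `G^(c-1)` and `G^(c)`; hence `E`, `F` and `G^(1)` determine `G` one step at a time.
In the same way, with `c = 0`, the double ratios determine `H^(1)` from `E`, `G` and `F^(1)`. The
triple ratios of `(E, H, F)` are, up to sign, the inverses of those of `(E, F, H)`, so they then
determine `H`.

It remains to move `E`, `F` and `G^(1)` to their primed counterparts. Vectors spanning the lines
`E^(i+1) ∩ F^(d-i)` form a basis adapted to `E` and, in reverse order, to `F`; it can be rescaled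
so that the sum of its vectors spans `G^(1)`.
-/

open Module Set

section Append

variable {α β : Type*} {m n : ℕ} (u : Fin m → α) (v : Fin n → α)

theorem range_fin_append : range (Fin.append u v) = range u ∪ range v := by
  rw [← finSumFinEquiv.surjective.range_comp, ← Sum.elim_range, ← Fin.append_comp_sumElim]
  rfl

theorem comp_fin_append (f : α → β) : f ∘ Fin.append u v = Fin.append (f ∘ u) (f ∘ v) := by
  funext i
  cases i using Fin.addCases <;> simp

end Append

section WedgeDet

variable {d m n p : ℕ} (u : Fin m → Vec d) (v : Fin n → Vec d) (w : Fin p → Vec d)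

theorem wedgeDet_eq_det (h : m + n + p = d) :
    wedgeDet u v w = (Pi.basisFun ℝ (Fin d)).det
      fun j => Fin.append (Fin.append u v) w (Fin.cast h.symm j) := by
  rw [wedgeDet, dif_pos h, Pi.basisFun_det_apply, ← Matrix.det_transpose]
  rfl

variable {u v w}

theorem wedgeDet_ne_zero_iff_linearIndependent (h : m + n + p = d) :
    wedgeDet u v w ≠ 0 ↔ LinearIndependent ℝ (Fin.append (Fin.append u v) w) := by
  subst h
  have hcard : Fintype.card (Fin (m + n + p)) = finrank ℝ (Vec (m + n + p)) := by simp
  rw [wedgeDet_eq_det u v w rfl, ← isUnit_iff_ne_zero, ← Module.Basis.is_basis_iff_det]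
  exact ⟨And.left, fun hli => ⟨hli, hli.span_eq_top_of_card_eq_finrank' hcard⟩⟩

theorem wedgeDet_ne_zero_of_span_eq_top (h : m + n + p = d)
    (hspan : Submodule.span ℝ (range u) ⊔ Submodule.span ℝ (range v) ⊔
      Submodule.span ℝ (range w) = ⊤) : wedgeDet u v w ≠ 0 := by
  rw [wedgeDet_ne_zero_iff_linearIndependent h]
  refine linearIndependent_of_top_le_span_of_card_eq_finrank ?_ (by simp [h])
  rw [range_fin_append, range_fin_append, Submodule.span_union, Submodule.span_union, hspan]

theorem wedgeDet_snoc_sub_smul (x y : Vec d) (l : ℝ) :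
    wedgeDet u v (Fin.snoc w (x - l • y) : Fin (p + 1) → Vec d) =
      wedgeDet u v (Fin.snoc w x : Fin (p + 1) → Vec d) -
        l * wedgeDet u v (Fin.snoc w y : Fin (p + 1) → Vec d) := by
  by_cases h : m + n + (p + 1) = d
  · subst h
    have hsnoc (z) : wedgeDet u v (Fin.snoc w z : Fin (p + 1) → _) =
        (Pi.basisFun ℝ (Fin (m + n + p + 1))).det.toMultilinearMap.curryRight
          (Fin.append (Fin.append u v) w) z := by
      rw [wedgeDet_eq_det u v _ rfl, MultilinearMap.curryRight_apply, ← Fin.append_snoc]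
      rfl
    simp only [hsnoc, map_sub, map_smul, smul_eq_mul]
  · simp only [wedgeDet, dif_neg h, mul_zero, sub_zero]

theorem sub_smul_mem_of_wedgeDet_snoc_eq {x y : Vec d} {l : ℝ}
    (hy : wedgeDet u v (Fin.snoc w y : Fin (p + 1) → Vec d) ≠ 0)
    (hxy : wedgeDet u v (Fin.snoc w x : Fin (p + 1) → Vec d) =
      l * wedgeDet u v (Fin.snoc w y : Fin (p + 1) → Vec d)) :
    x - l • y ∈ Submodule.span ℝ (range u) ⊔ Submodule.span ℝ (range v) ⊔
      Submodule.span ℝ (range w) := by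
  have h : m + n + (p + 1) = d := by
    by_contra h
    exact hy (dif_neg h)
  have hzero : ¬ wedgeDet u v (Fin.snoc w (x - l • y) : Fin (p + 1) → Vec d) ≠ 0 := by
    rw [wedgeDet_snoc_sub_smul, hxy, sub_self, not_ne_iff]
  rw [wedgeDet_ne_zero_iff_linearIndependent h, Fin.append_snoc, linearIndependent_finSnoc]
    at hy hzero
  rw [← Submodule.span_union, ← Submodule.span_union, ← range_fin_append, ← range_fin_append]
  simpa only [hy.1, true_and, not_not] using hzero

variable (m n p) in
theorem exists_wedgeDet_swap : ∃ ε : ℝ, ∀ (u : Fin m → Vec d) (v : Fin n → Vec d)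
    (w : Fin p → Vec d), wedgeDet u w v = ε * wedgeDet u v w := by
  by_cases h : m + n + p = d
  · have h' : m + p + n = d := by rw [add_right_comm, h]
    let blocks {k l r : ℕ} (hd : k + l + r = d) : (Fin k ⊕ Fin l) ⊕ Fin r ≃ Fin d :=
      ((finSumFinEquiv.sumCongr (.refl _)).trans finSumFinEquiv).trans (finCongr hd)
    let swap : (Fin m ⊕ Fin p) ⊕ Fin n ≃ (Fin m ⊕ Fin n) ⊕ Fin p :=
      (Equiv.sumAssoc ..).trans
        (((Equiv.refl _).sumCongr (Equiv.sumComm ..)).trans (Equiv.sumAssoc ..).symm)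
    let σ : Equiv.Perm (Fin d) := (blocks h').symm.trans (swap.trans (blocks h))
    refine ⟨(Equiv.Perm.sign σ : ℤ), fun u v w => ?_⟩
    have hperm : (fun j => Fin.append (Fin.append u w) v (Fin.cast h'.symm j)) =
        (fun j => Fin.append (Fin.append u v) w (Fin.cast h.symm j)) ∘ σ := by
      funext j
      obtain ⟨((i | i) | i), rfl⟩ := (blocks h').surjective j <;> simp [σ, blocks, swap]
    rw [wedgeDet_eq_det _ _ _ h', wedgeDet_eq_det _ _ _ h, hperm, AlternatingMap.map_perm]
    simp [Units.smul_def]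
  · refine ⟨0, fun u v w => ?_⟩
    rw [zero_mul, wedgeDet, dif_neg (by rwa [add_right_comm])]

theorem wedgeDet_map (T : Vec d →ₗ[ℝ] Vec d) :
    wedgeDet (T ∘ u) (T ∘ v) (T ∘ w) = LinearMap.det T * wedgeDet u v w := by
  by_cases h : m + n + p = d
  · rw [wedgeDet_eq_det _ _ _ h, wedgeDet_eq_det _ _ _ h, ← Module.Basis.det_comp,
      ← comp_fin_append, ← comp_fin_append]
    rfl
  · simp [wedgeDet, h]

end WedgeDet

section Flag

variable {d : ℕ} {A A' : ℕ → Submodule ℝ (Vec d)} {v : ℕ → Vec d}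

theorem IsFlag.apply_zero (hA : IsFlag A) : A 0 = ⊥ :=
  Submodule.finrank_eq_zero.1 (hA.2 0 d.zero_le)

theorem IsFlag.apply_self (hA : IsFlag A) : A d = ⊤ :=
  Submodule.eq_top_of_finrank_eq ((hA.2 d le_rfl).trans (finrank_fin_fun ℝ).symm)

/-- A sequence of vectors of which the `i`-th one spans the graded piece `A (i + 1) / A i` of the
flag `A`, for every `i < d`. Later terms are unconstrained, which lets segments of any length be
taken. -/
def AdaptedTo (A : ℕ → Submodule ℝ (Vec d)) (v : ℕ → Vec d) : Prop :=
  ∀ i < d, v i ∈ A (i + 1) ∧ v i ∉ A i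

/-- The first `k` terms of a sequence; for a sequence adapted to a flag `A` this tuple stands for a
nonzero element of `⋀^k A^(k)`. -/
def initSeg (v : ℕ → Vec d) (k : ℕ) (i : Fin k) : Vec d := v i

theorem initSeg_succ (v : ℕ → Vec d) (k : ℕ) :
    initSeg v (k + 1) = Fin.snoc (initSeg v k) (v k) :=
  (Fin.snoc_init_self (initSeg v (k + 1))).symm

theorem initSeg_one (v : ℕ → Vec d) : initSeg v 1 = ![v 0] :=
  funext fun i => by rw [Subsingleton.elim i 0]; rfl

theorem initSeg_congr {v v' : ℕ → Vec d} {k : ℕ} (h : ∀ i < k, v i = v' i) :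
    initSeg v k = initSeg v' k :=
  funext fun i => h i i.2

theorem IsFlag.exists_adaptedTo (hA : IsFlag A) : ∃ v, AdaptedTo A v := by
  have hex (i : ℕ) (hi : i < d) : ∃ x, x ∈ A (i + 1) ∧ x ∉ A i := by
    refine SetLike.exists_of_lt ((hA.1 i.le_succ).lt_of_ne fun h => ?_)
    have hfinrank := congrArg (fun W : Submodule ℝ (Vec d) => finrank ℝ W) h
    simp only [hA.2 i hi.le, hA.2 (i + 1) hi] at hfinrank
    omega
  choose! v hv using hex
  exact ⟨v, hv⟩

theorem IsFlag.exists_adaptedTo_eqOn (hA' : IsFlag A') (hv : AdaptedTo A v) {n : ℕ}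
    (hAA' : ∀ k ≤ n, A k = A' k) : ∃ v', AdaptedTo A' v' ∧ ∀ i < n, v i = v' i := by
  obtain ⟨v', hv'⟩ := hA'.exists_adaptedTo
  refine ⟨fun i => if i < n then v i else v' i, fun i hi => ?_, fun i hi => (if_pos hi).symm⟩
  by_cases hin : i < n
  · simpa only [if_pos hin, hAA' (i + 1) hin, hAA' i hin.le] using hv i hi
  · simpa only [if_neg hin] using hv' i hi

theorem IsFlag.apply_one_eq_span (hA : IsFlag A) (hd : 0 < d) {x : Vec d} (hx : x ∈ A 1)
    (hx0 : x ≠ 0) : A 1 = Submodule.span ℝ {x} := by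
  refine (Submodule.eq_of_le_of_finrank_eq ((Submodule.span_singleton_le_iff_mem ..).2 hx) ?_).symm
  rw [finrank_span_singleton hx0, hA.2 1 hd]

theorem AdaptedTo.apply_zero (hv : AdaptedTo A v) (hA : IsFlag A) (hd : 0 < d) :
    v 0 ∈ A 1 ∧ v 0 ≠ 0 := by
  simpa only [hA.apply_zero, Submodule.mem_bot] using hv 0 hd

theorem AdaptedTo.initSeg_mem (hv : AdaptedTo A v) (hA : IsFlag A) {k : ℕ} (hk : k ≤ d)
    (i : Fin k) : initSeg v k i ∈ A k :=
  hA.1 i.2 (hv i (i.2.trans_le hk)).1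

theorem AdaptedTo.linearIndependent_initSeg (hv : AdaptedTo A v) (hA : IsFlag A) :
    ∀ k ≤ d, LinearIndependent ℝ (initSeg v k)
  | 0, _ => linearIndependent_empty_type
  | k + 1, hk => by
    rw [initSeg_succ, linearIndependent_finSnoc]
    refine ⟨hv.linearIndependent_initSeg hA k (by omega), fun hmem => (hv k hk).2 ?_⟩
    exact Submodule.span_le.2 (range_subset_iff.2 (hv.initSeg_mem hA (by omega))) hmem

theorem AdaptedTo.choiceFor (hv : AdaptedTo A v) (hA : IsFlag A) : ChoiceFor A (initSeg v) := by
  intro k hk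
  refine Submodule.eq_of_le_of_finrank_eq
    (Submodule.span_le.2 (range_subset_iff.2 (hv.initSeg_mem hA hk))) ?_
  rw [finrank_span_eq_card (hv.linearIndependent_initSeg hA k hk), Fintype.card_fin, hA.2 k hk]

theorem IsFlag.exists_choiceFor (hA : IsFlag A) : ∃ e, ChoiceFor A e :=
  let ⟨_, hv⟩ := hA.exists_adaptedTo
  ⟨_, hv.choiceFor hA⟩

theorem AdaptedTo.smul (hv : AdaptedTo A v) {c : ℕ → ℝ} (hc : ∀ i < d, c i ≠ 0) :
    AdaptedTo A fun i => c i • v i := fun i hi => by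
  simpa only [Submodule.smul_mem_iff _ (hc i hi)] using hv i hi

theorem AdaptedTo.exists_linearEquiv {v' : ℕ → Vec d} (hv : AdaptedTo A v) (hA : IsFlag A)
    (hv' : AdaptedTo A' v') (hA' : IsFlag A') :
    ∃ T : Vec d ≃ₗ[ℝ] Vec d, ∀ i < d, T (v i) = v' i := by
  have hcard : Fintype.card (Fin d) = finrank ℝ (Vec d) := by simp
  have hli := hv.linearIndependent_initSeg hA d le_rfl
  have hli' := hv'.linearIndependent_initSeg hA' d le_rfl
  let b := basisOfLinearIndependentOfCardEqFinrank' _ hli hcard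
  let b' := basisOfLinearIndependentOfCardEqFinrank' _ hli' hcard
  refine ⟨b.equiv b' (Equiv.refl _), fun i hi => ?_⟩
  simpa [b, b', initSeg] using b.equiv_apply ⟨i, hi⟩ b' (Equiv.refl _)

/-- The image of a flag under a linear automorphism. -/
def mapFlag (T : Vec d ≃ₗ[ℝ] Vec d) (A : ℕ → Submodule ℝ (Vec d)) : ℕ → Submodule ℝ (Vec d) :=
  fun k => (A k).map (T : Vec d →ₗ[ℝ] Vec d)

theorem AdaptedTo.mapFlag_eqOn {v' : ℕ → Vec d} (hv : AdaptedTo A v) (hA : IsFlag A)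
    (hv' : AdaptedTo A' v') (hA' : IsFlag A') {T : Vec d ≃ₗ[ℝ] Vec d}
    (hT : ∀ i < d, T (v i) = v' i) : EqOn (mapFlag T A) A' (Iic d) := by
  intro k (hk : k ≤ d)
  have hseg : T ∘ initSeg v k = initSeg v' k := funext fun i => hT i (i.2.trans_le hk)
  rw [mapFlag, ← hv.choiceFor hA k hk, ← hv'.choiceFor hA' k hk, Submodule.map_span, ← range_comp,
    LinearEquiv.coe_coe, hseg]

theorem IsFlag.map (hA : IsFlag A) (T : Vec d ≃ₗ[ℝ] Vec d) : IsFlag (mapFlag T A) :=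
  ⟨fun _ _ hij => Submodule.map_mono (hA.1 hij),
    fun i hi => (T.finrank_map_eq (A i)).trans (hA.2 i hi)⟩

theorem ChoiceFor.symm_comp {T : Vec d ≃ₗ[ℝ] Vec d} {e : (k : ℕ) → Fin k → Vec d}
    (he : ChoiceFor (mapFlag T A) e) : ChoiceFor A fun k => T.symm ∘ e k := by
  intro k hk
  rw [range_comp, ← LinearEquiv.coe_coe, ← Submodule.map_span, he k hk, mapFlag,
    ← Submodule.map_comp]
  simp

theorem ChoiceFor.congr {e : (k : ℕ) → Fin k → Vec d} (he : ChoiceFor A e)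
    (hAA' : EqOn A A' (Iic d)) : ChoiceFor A' e :=
  fun k hk => (he k hk).trans (hAA' hk)

end Flag

section Generic

variable {d a b c : ℕ} {E F G : ℕ → Submodule ℝ (Vec d)}

theorem MaxSpan.comp {s t : ℕ} {A : Fin t → ℕ → Submodule ℝ (Vec d)} (h : MaxSpan A)
    (hA : ∀ j, A j 0 = ⊥) {σ : Fin s → Fin t} (hσ : Function.Injective σ) : MaxSpan (A ∘ σ) := by
  intro a ha
  let a' : Fin t → ℕ := Function.extend σ a fun _ => 0
  have ha'σ (i) : a' (σ i) = a i := hσ.extend_apply a _ i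
  have ha'0 (j) (hj : j ∉ range σ) : a' j = 0 := Function.extend_apply' a _ j hj
  have hle (j) : a' j ≤ d := by
    by_cases hj : j ∈ range σ
    · obtain ⟨i, rfl⟩ := hj
      exact (ha'σ i).trans_le (ha i)
    · exact (ha'0 j hj).trans_le d.zero_le
  have hsum : ∑ i, a i = ∑ j, a' j :=
    Fintype.sum_of_injective σ hσ a a' ha'0 fun i => (ha'σ i).symm
  have hsup : ⨆ i, (A ∘ σ) i (a i) = ⨆ j, A j (a' j) := by
    refine le_antisymm (iSup_le fun i => ?_) (iSup_le fun j => ?_)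
    · exact le_iSup_of_le (σ i) (by rw [ha'σ, Function.comp_apply])
    · by_cases hj : j ∈ range σ
      · obtain ⟨i, rfl⟩ := hj
        exact le_iSup_of_le i (by rw [ha'σ, Function.comp_apply])
      · rw [ha'0 j hj, hA j]
        exact bot_le
  rw [hsup, hsum]
  exact h a' hle

/-- A triple of flags with the maximum span property. -/
structure GenericTriple (E F G : ℕ → Submodule ℝ (Vec d)) : Prop where
  isFlag_left : IsFlag E
  isFlag_mid : IsFlag F
  isFlag_right : IsFlag G
  maxSpan : MaxSpan ![E, F, G]

theorem MaxSpan.genericTriple {t : ℕ} {A : Fin t → ℕ → Submodule ℝ (Vec d)} (h : MaxSpan A)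
    (hA : ∀ j, IsFlag (A j)) {i j k : Fin t} (hijk : Function.Injective ![i, j, k]) :
    GenericTriple (A i) (A j) (A k) := by
  have hcomp : A ∘ ![i, j, k] = ![A i, A j, A k] := by
    funext l
    fin_cases l <;> rfl
  exact ⟨hA i, hA j, hA k, hcomp ▸ h.comp (fun l => (hA l).apply_zero) hijk⟩

namespace GenericTriple

theorem swap (h : GenericTriple E F G) : GenericTriple E G F :=
  h.maxSpan.genericTriple
    (by simpa [Fin.forall_fin_succ] using ⟨h.isFlag_left, h.isFlag_mid, h.isFlag_right⟩)
    (i := 0) (j := 2) (k := 1) (by decide)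

theorem finrank_sup (h : GenericTriple E F G) (ha : a ≤ d) (hb : b ≤ d) (hc : c ≤ d) :
    finrank ℝ ↥(E a ⊔ F b ⊔ G c) = min (a + b + c) d := by
  have hsup : ⨆ j, ![E, F, G] j (![a, b, c] j) = E a ⊔ F b ⊔ G c := iSup_fin_three
  rw [← hsup, h.maxSpan ![a, b, c] (by simp [Fin.forall_fin_succ, ha, hb, hc]),
    Fin.sum_univ_three]
  rfl

theorem sup_eq_top (h : GenericTriple E F G) (habc : a + b + c = d) : E a ⊔ F b ⊔ G c = ⊤ := by
  apply Submodule.eq_top_of_finrank_eq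
  rw [h.finrank_sup (by omega) (by omega) (by omega), habc, min_self, finrank_fin_fun]

theorem disjoint (h : GenericTriple E F G) (habc : a + b + c ≤ d) :
    Disjoint (E a ⊔ F b) (G c) := by
  have hsup := h.finrank_sup (a := a) (b := b) (c := c) (by omega) (by omega) (by omega)
  have hsup₀ := h.finrank_sup (a := a) (b := b) (c := 0) (by omega) (by omega) (by omega)
  have hdim := Submodule.finrank_sup_add_finrank_inf_eq (E a ⊔ F b) (G c)
  rw [h.isFlag_right.apply_zero, sup_bot_eq] at hsup₀
  rw [hsup, hsup₀, h.isFlag_right.2 c (by omega)] at hdim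
  exact disjoint_iff.2 (Submodule.finrank_eq_zero.1 (by omega))

theorem disjoint_left_mid (h : GenericTriple E F G) (hab : a + b ≤ d) : Disjoint (E a) (F b) :=
  (h.swap.disjoint (b := 0) hab).mono_left le_sup_left

theorem map (h : GenericTriple E F G) (T : Vec d ≃ₗ[ℝ] Vec d) :
    GenericTriple (mapFlag T E) (mapFlag T F) (mapFlag T G) where
  isFlag_left := h.isFlag_left.map T
  isFlag_mid := h.isFlag_mid.map T
  isFlag_right := h.isFlag_right.map T
  maxSpan a ha := by
    have hmap : ⨆ j, ![mapFlag T E, mapFlag T F, mapFlag T G] j (a j) =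
        (⨆ j, ![E, F, G] j (a j)).map (T : Vec d →ₗ[ℝ] Vec d) := by
      rw [Submodule.map_iSup]
      exact iSup_congr fun j => by fin_cases j <;> rfl
    rw [hmap, T.finrank_map_eq, h.maxSpan a ha]

theorem wedgeDet_ne_zero (h : GenericTriple E F G) {e f g : (k : ℕ) → Fin k → Vec d}
    (he : ChoiceFor E e) (hf : ChoiceFor F f) (hg : ChoiceFor G g) (habc : a + b + c = d) :
    wedgeDet (e a) (f b) (g c) ≠ 0 := by
  apply wedgeDet_ne_zero_of_span_eq_top habc
  rw [he a (by omega), hf b (by omega), hg c (by omega), h.sup_eq_top habc]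

theorem wedgeDet_vec_ne_zero (h : GenericTriple E F G) {e f : (k : ℕ) → Fin k → Vec d}
    (he : ChoiceFor E e) (hf : ChoiceFor F f) {x : Vec d} (hx : x ∈ G 1) (hx0 : x ≠ 0)
    (hab : a + b + 1 = d) : wedgeDet (e a) (f b) ![x] ≠ 0 := by
  apply wedgeDet_ne_zero_of_span_eq_top hab
  rw [he a (by omega), hf b (by omega), Matrix.range_cons, Matrix.range_empty, union_empty,
    ← h.isFlag_right.apply_one_eq_span (by omega) hx hx0, h.sup_eq_top hab]

theorem mem_right_of_forall_mem_sup (h : GenericTriple E F G) (hc : c < d) {x : Vec d}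
    (hx : ∀ a b, a + b + c + 1 = d → x ∈ E a ⊔ F b ⊔ G c) : x ∈ G c := by
  have hmem (b : ℕ) : ∀ a, a + b + c + 1 = d → x ∈ E a ⊔ G c := by
    induction b with
    | zero => simpa [h.isFlag_mid.apply_zero] using fun a => hx a 0
    | succ b ih =>
      intro a hab
      -- `E (a + 1)` is traded for `E a` by the modular law, as `F (b + 1)` meets `E (a + 1) ⊔ G c`
      -- trivially.
      have hmod : (E a ⊔ G c ⊔ F (b + 1)) ⊓ (E (a + 1) ⊔ G c) = E a ⊔ G c := by
        rw [sup_inf_assoc_of_le _ (sup_le_sup_right (h.isFlag_left.1 a.le_succ) _), inf_comm,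
          (h.swap.disjoint (by omega)).eq_bot, sup_bot_eq]
      rw [← hmod, sup_right_comm]
      exact ⟨hx a (b + 1) hab, ih (a + 1) (by omega)⟩
  simpa [h.isFlag_left.apply_zero] using hmem (d - c - 1) 0 (by omega)

end GenericTriple

end Generic

section Uniqueness

variable {d : ℕ} {E F G H E' F' G' H' : ℕ → Submodule ℝ (Vec d)}

theorem exists_eq_mul_of_mul_eq_mul {K : Type*} [Field K] {n : ℕ} {P P' : ℕ → ℕ → K}
    (hP : ∀ a b, a + b = n → P a b ≠ 0)
    (h : ∀ a b, a + b + 1 = n → P a (b + 1) * P' (a + 1) b = P' a (b + 1) * P (a + 1) b) :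
    ∃ l, ∀ a b, a + b = n → P' a b = l * P a b := by
  refine ⟨P' 0 n / P 0 n, fun a => ?_⟩
  induction a with
  | zero =>
    intro b hb
    rw [zero_add] at hb
    rw [hb, div_mul_cancel₀ _ (hP 0 n n.zero_add)]
  | succ a ih =>
    intro b hb
    apply mul_left_cancel₀ (hP a (b + 1) (by omega))
    rw [h a b (by omega), ih (b + 1) (by omega)]
    ring

theorem GenericTriple.apply_succ_eq (h : GenericTriple E F G) (hG' : IsFlag G')
    {e f : (k : ℕ) → Fin k → Vec d} (he : ChoiceFor E e) (hf : ChoiceFor F f) {v v' : ℕ → Vec d}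
    (hv : AdaptedTo G v) (hv' : AdaptedTo G' v') {c : ℕ} (hc : c < d) (hvv' : ∀ i < c, v i = v' i)
    (hcross : ∀ a b, a + b + c + 2 = d →
      wedgeDet (e a) (f (b + 1)) (initSeg v (c + 1)) *
          wedgeDet (e (a + 1)) (f b) (initSeg v' (c + 1)) =
        wedgeDet (e a) (f (b + 1)) (initSeg v' (c + 1)) *
          wedgeDet (e (a + 1)) (f b) (initSeg v (c + 1))) :
    G (c + 1) = G' (c + 1) := by
  have hg := hv.choiceFor h.isFlag_right
  have hne (a b) (hab : a + b = d - c - 1) : wedgeDet (e a) (f b) (initSeg v (c + 1)) ≠ 0 :=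
    h.wedgeDet_ne_zero he hf hg (by omega)
  obtain ⟨l, hl⟩ := exists_eq_mul_of_mul_eq_mul
    (P' := fun a b => wedgeDet (e a) (f b) (initSeg v' (c + 1))) hne
    fun a b hab => hcross a b (by omega)
  have hmem : v' c - l • v c ∈ G c := by
    refine h.mem_right_of_forall_mem_sup hc fun a b hab => ?_
    have hne' := hne a b (by omega)
    have hl' := hl a b (by omega)
    rw [initSeg_succ] at hne'
    rw [initSeg_succ, initSeg_succ, ← initSeg_congr hvv'] at hl'
    rw [← he a (by omega), ← hf b (by omega), ← hg c (by omega)]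
    exact sub_smul_mem_of_wedgeDet_snoc_eq hne' hl'
  have hv'mem : ∀ i : Fin (c + 1), initSeg v' (c + 1) i ∈ G (c + 1) := by
    rw [initSeg_succ, ← initSeg_congr hvv']
    refine Fin.lastCases ?_ fun i => ?_
    · rw [Fin.snoc_last, ← sub_add_cancel (v' c) (l • v c)]
      exact add_mem (h.isFlag_right.1 c.le_succ hmem) (Submodule.smul_mem _ l (hv c hc).1)
    · rw [Fin.snoc_castSucc]
      exact h.isFlag_right.1 c.le_succ (hv.initSeg_mem h.isFlag_right hc.le i)
  have hle : G' (c + 1) ≤ G (c + 1) := by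
    rw [← hv'.choiceFor hG' (c + 1) hc]
    exact Submodule.span_le.2 (range_subset_iff.2 hv'mem)
  refine (Submodule.eq_of_le_of_finrank_eq hle ?_).symm
  rw [hG'.2 _ hc, h.isFlag_right.2 _ hc]

/-- Equality of all the triple ratios `X_{a,b,c}`, `(a,b,c) ∈ Θ°_d`, of two triples of flags,
computed from arbitrary choices. -/
def SameTripleRatios (E F G E' F' G' : ℕ → Submodule ℝ (Vec d)) : Prop :=
  ∀ a b c : ℕ, 1 ≤ a → 1 ≤ b → 1 ≤ c → a + b + c = d →
    ∀ e f g e' f' g' : (k : ℕ) → Fin k → Vec d,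
      ChoiceFor E e → ChoiceFor F f → ChoiceFor G g →
      ChoiceFor E' e' → ChoiceFor F' f' → ChoiceFor G' g' →
      tripleRatio a b c e f g = tripleRatio a b c e' f' g'

/-- Equality of all the double ratios `Z_i`, `0 < i < d`, of two quadruples of flags, computed from
arbitrary choices. -/
def SameDoubleRatios (E F G H E' F' G' H' : ℕ → Submodule ℝ (Vec d)) : Prop :=
  ∀ i : ℕ, 1 ≤ i → i < d →
    ∀ (e g e' g' : (k : ℕ) → Fin k → Vec d) (f1 h1 f1' h1' : Vec d),
      ChoiceFor E e → ChoiceFor G g → ChoiceFor E' e' → ChoiceFor G' g' →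
      f1 ∈ F 1 → f1 ≠ 0 → h1 ∈ H 1 → h1 ≠ 0 →
      f1' ∈ F' 1 → f1' ≠ 0 → h1' ∈ H' 1 → h1' ≠ 0 →
      doubleRatio i e g f1 h1 = doubleRatio i e' g' f1' h1'

theorem exists_tripleRatio_swap (a b c : ℕ) : ∃ ε : ℝ, ∀ e f g : (k : ℕ) → Fin k → Vec d,
    tripleRatio a c b e g f = ε * (tripleRatio a b c e f g)⁻¹ := by
  obtain ⟨ε₁, h₁⟩ := exists_wedgeDet_swap (d := d) (a - 1) (b + 1) c
  obtain ⟨ε₂, h₂⟩ := exists_wedgeDet_swap (d := d) a (b - 1) (c + 1)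
  obtain ⟨ε₃, h₃⟩ := exists_wedgeDet_swap (d := d) (a + 1) b (c - 1)
  obtain ⟨ε₄, h₄⟩ := exists_wedgeDet_swap (d := d) (a + 1) (b - 1) c
  obtain ⟨ε₅, h₅⟩ := exists_wedgeDet_swap (d := d) a (b + 1) (c - 1)
  obtain ⟨ε₆, h₆⟩ := exists_wedgeDet_swap (d := d) (a - 1) b (c + 1)
  refine ⟨ε₁ * ε₂ * ε₃ / (ε₄ * ε₅ * ε₆), fun e f g => ?_⟩
  simp only [tripleRatio, h₁, h₂, h₃, h₄, h₅, h₆, inv_div]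
  rw [div_mul_div_comm]
  congr 1 <;> ring

theorem SameTripleRatios.swap (h : SameTripleRatios E F G E' F' G') :
    SameTripleRatios E G F E' G' F' := by
  intro a c b ha hc hb hd e g f e' g' f' he hg hf he' hg' hf'
  obtain ⟨ε, hε⟩ := exists_tripleRatio_swap (d := d) a b c
  rw [hε, hε, h a b c ha hb hc (by omega) e f g e' f' g' he hf hg he' hf' hg']

theorem tripleRatio_map (T : Vec d ≃ₗ[ℝ] Vec d) (a b c : ℕ) (e f g : (k : ℕ) → Fin k → Vec d) :
    tripleRatio a b c (fun k => T ∘ e k) (fun k => T ∘ f k) (fun k => T ∘ g k) =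
      tripleRatio a b c e f g := by
  have hT := T.isUnit_det'.ne_zero
  have hmap {m n p} (u : Fin m → Vec d) (v : Fin n → Vec d) (w : Fin p → Vec d) :=
    wedgeDet_map (u := u) (v := v) (w := w) T.toLinearMap
  simp only [LinearEquiv.coe_coe] at hmap
  simp only [tripleRatio, hmap]
  field_simp

theorem doubleRatio_map (T : Vec d ≃ₗ[ℝ] Vec d) (i : ℕ) (e g : (k : ℕ) → Fin k → Vec d)
    (x y : Vec d) :
    doubleRatio i (fun k => T ∘ e k) (fun k => T ∘ g k) (T x) (T y) = doubleRatio i e g x y := by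
  have hT := T.isUnit_det'.ne_zero
  have hmap {m n} (u : Fin m → Vec d) (v : Fin n → Vec d) (z : Vec d) :
      wedgeDet (T ∘ u) (T ∘ v) ![T z] = LinearMap.det T.toLinearMap * wedgeDet u v ![z] := by
    rw [← wedgeDet_map]
    congr 1
    funext j
    simp
  simp only [doubleRatio, hmap]
  field_simp

theorem SameTripleRatios.map (h : SameTripleRatios E F G E' F' G') (T : Vec d ≃ₗ[ℝ] Vec d) :
    SameTripleRatios (mapFlag T E) (mapFlag T F) (mapFlag T G) E' F' G' := by
  intro a b c ha hb hc hd e f g e' f' g' he hf hg he' hf' hg'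
  rw [← tripleRatio_map T.symm]
  exact h a b c ha hb hc hd _ _ _ _ _ _ he.symm_comp hf.symm_comp hg.symm_comp he' hf' hg'

theorem SameDoubleRatios.map (h : SameDoubleRatios E F G H E' F' G' H') (T : Vec d ≃ₗ[ℝ] Vec d) :
    SameDoubleRatios (mapFlag T E) (mapFlag T F) (mapFlag T G) (mapFlag T H) E' F' G' H' := by
  intro i hi hid e g e' g' x y x' y' he hg he' hg' hx hx0 hy hy0
  rw [← doubleRatio_map T.symm]
  refine h i hi hid _ _ _ _ _ _ _ _ he.symm_comp hg.symm_comp he' hg' ?_ ?_ ?_ ?_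
  · exact (Submodule.mem_map_equiv _).1 hx
  · simpa using hx0
  · exact (Submodule.mem_map_equiv _).1 hy
  · simpa using hy0

theorem wedgeDet_mul_eq_of_tripleRatio_eq {a b c : ℕ} {e f g g' : (k : ℕ) → Fin k → Vec d}
    (hX : tripleRatio (a + 1) (b + 1) (c + 1) e f g = tripleRatio (a + 1) (b + 1) (c + 1) e f g')
    (hgg' : ∀ k ≤ c + 1, g k = g' k) (habc : a + b + c + 3 = d)
    (hne : ∀ i j k, i + j + k = d → wedgeDet (e i) (f j) (g k) ≠ 0)
    (hne' : ∀ i j k, i + j + k = d → wedgeDet (e i) (f j) (g' k) ≠ 0) :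
    wedgeDet (e a) (f (b + 1)) (g (c + 2)) * wedgeDet (e (a + 1)) (f b) (g' (c + 2)) =
      wedgeDet (e a) (f (b + 1)) (g' (c + 2)) * wedgeDet (e (a + 1)) (f b) (g (c + 2)) := by
  have h₁ := hne (a + 1) (b + 2) c (by omega)
  have h₂ := hne (a + 2) b (c + 1) (by omega)
  have h₃ := hne (a + 2) (b + 1) c (by omega)
  have h₄ := hne a (b + 2) (c + 1) (by omega)
  have h₅ := hne (a + 1) b (c + 2) (by omega)
  have h₆ := hne' (a + 1) b (c + 2) (by omega)
  simp only [tripleRatio, ← hgg' (c + 1) le_rfl, ← hgg' (c + 1 - 1) (by omega)] at hX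
  have hX' :
      wedgeDet (e a) (f (b + 1)) (g (c + 2)) * wedgeDet (e (a + 1)) (f (b + 2)) (g c) *
          wedgeDet (e (a + 2)) (f b) (g (c + 1)) /
        (wedgeDet (e (a + 2)) (f (b + 1)) (g c) * wedgeDet (e (a + 1)) (f b) (g (c + 2)) *
          wedgeDet (e a) (f (b + 2)) (g (c + 1))) =
      wedgeDet (e a) (f (b + 1)) (g' (c + 2)) * wedgeDet (e (a + 1)) (f (b + 2)) (g c) *
          wedgeDet (e (a + 2)) (f b) (g (c + 1)) /
        (wedgeDet (e (a + 2)) (f (b + 1)) (g c) * wedgeDet (e (a + 1)) (f b) (g' (c + 2)) *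
          wedgeDet (e a) (f (b + 2)) (g (c + 1))) := hX
  field_simp at hX'
  linear_combination hX'

theorem wedgeDet_mul_eq_of_doubleRatio_eq {a b : ℕ} {e g : (k : ℕ) → Fin k → Vec d}
    {x y y' : Vec d} (hZ : doubleRatio (a + 1) e g x y = doubleRatio (a + 1) e g x y')
    (hab : a + b + 2 = d) (hx : ∀ i j, i + j + 1 = d → wedgeDet (e i) (g j) ![x] ≠ 0)
    (hy : ∀ i j, i + j + 1 = d → wedgeDet (e i) (g j) ![y] ≠ 0)
    (hy' : ∀ i j, i + j + 1 = d → wedgeDet (e i) (g j) ![y'] ≠ 0) :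
    wedgeDet (e a) (g (b + 1)) ![y] * wedgeDet (e (a + 1)) (g b) ![y'] =
      wedgeDet (e a) (g (b + 1)) ![y'] * wedgeDet (e (a + 1)) (g b) ![y] := by
  have h₁ := hx (a + 1) b (by omega)
  have h₂ := hx a (b + 1) (by omega)
  have h₃ := hy (a + 1) b (by omega)
  have h₄ := hy' (a + 1) b (by omega)
  simp only [doubleRatio, neg_inj] at hZ
  rw [show d - (a + 1) - 1 = b by omega, show d - (a + 1) = b + 1 by omega,
    Nat.add_sub_cancel] at hZ
  field_simp at hZ
  linear_combination hZ

theorem SameTripleRatios.eqOn (hX : SameTripleRatios E F G E' F' G') (h : GenericTriple E F G)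
    (h' : GenericTriple E' F' G') (hE : EqOn E E' (Iic d)) (hF : EqOn F F' (Iic d))
    (hG : G 1 = G' 1) : EqOn G G' (Iic d) := by
  intro k (hk : k ≤ d)
  induction k using Nat.strong_induction_on with
  | _ k ih =>
  obtain _ | _ | c := k
  · rw [h.isFlag_right.apply_zero, h'.isFlag_right.apply_zero]
  · exact hG
  obtain ⟨e, he⟩ := h.isFlag_left.exists_choiceFor
  obtain ⟨f, hf⟩ := h.isFlag_mid.exists_choiceFor
  obtain ⟨v, hv⟩ := h.isFlag_right.exists_adaptedTo
  obtain ⟨v', hv', hvv'⟩ := h'.isFlag_right.exists_adaptedTo_eqOn hv (n := c + 1)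
    fun k hk' => ih k (by omega) (by omega)
  have hg := hv.choiceFor h.isFlag_right
  have hg' := hv'.choiceFor h'.isFlag_right
  have he' := he.congr hE
  have hf' := hf.congr hF
  refine h.apply_succ_eq h'.isFlag_right he hf hv hv' hk hvv' fun a b hab => ?_
  exact wedgeDet_mul_eq_of_tripleRatio_eq
    (hX (a + 1) (b + 1) (c + 1) (by omega) (by omega) (by omega) (by omega)
      _ _ _ _ _ _ he hf hg he' hf' hg')
    (fun k hk' => initSeg_congr fun i hi => hvv' i (hi.trans_le hk')) (by omega)
    (fun _ _ _ => h.wedgeDet_ne_zero he hf hg) (fun _ _ _ => h'.wedgeDet_ne_zero he' hf' hg')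

theorem SameDoubleRatios.apply_one_eq (hZ : SameDoubleRatios E F G H E' F' G' H')
    (hEGF : GenericTriple E G F) (h : GenericTriple E G H) (h' : GenericTriple E' G' H')
    (hE : EqOn E E' (Iic d)) (hG : EqOn G G' (Iic d)) (hF : F 1 = F' 1) : H 1 = H' 1 := by
  obtain rfl | hd := d.eq_zero_or_pos
  · exact Subsingleton.elim _ _
  obtain ⟨e, he⟩ := h.isFlag_left.exists_choiceFor
  obtain ⟨g, hg⟩ := h.isFlag_mid.exists_choiceFor
  obtain ⟨x, hx⟩ := hEGF.isFlag_right.exists_adaptedTo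
  obtain ⟨y, hy⟩ := h.isFlag_right.exists_adaptedTo
  obtain ⟨y', hy'⟩ := h'.isFlag_right.exists_adaptedTo
  have he' := he.congr hE
  have hg' := hg.congr hG
  obtain ⟨hx1, hx0⟩ := hx.apply_zero hEGF.isFlag_right hd
  obtain ⟨hy1, hy0⟩ := hy.apply_zero h.isFlag_right hd
  obtain ⟨hy1', hy0'⟩ := hy'.apply_zero h'.isFlag_right hd
  refine h.apply_succ_eq h'.isFlag_right he hg hy hy' hd (by simp) fun a b hab => ?_
  rw [initSeg_one, initSeg_one]
  exact wedgeDet_mul_eq_of_doubleRatio_eq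
    (hZ (a + 1) (by omega) (by omega) _ _ _ _ _ _ _ _ he hg he' hg'
      hx1 hx0 hy1 hy0 (hF ▸ hx1) hx0 hy1' hy0')
    hab (fun _ _ => hEGF.wedgeDet_vec_ne_zero he hg hx1 hx0)
    (fun _ _ => h.wedgeDet_vec_ne_zero he hg hy1 hy0)
    (fun _ _ => h'.wedgeDet_vec_ne_zero he' hg' hy1' hy0')

end Uniqueness

section Frame

variable {d : ℕ} {E F G E' F' G' : ℕ → Submodule ℝ (Vec d)}

theorem AdaptedTo.exists_sum_eq {A : ℕ → Submodule ℝ (Vec d)} {v : ℕ → Vec d}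
    (hv : AdaptedTo A v) (hA : IsFlag A) (x : Vec d) :
    ∃ c : ℕ → ℝ, ∑ i ∈ Finset.range d, c i • v i = x := by
  have hx : x ∈ Submodule.span ℝ (range (initSeg v d)) := by
    rw [hv.choiceFor hA d le_rfl, hA.apply_self]
    exact Submodule.mem_top
  obtain ⟨c, rfl⟩ := (Submodule.mem_span_range_iff_exists_fun ℝ).1 hx
  refine ⟨Function.extend Fin.val c 0, ?_⟩
  simp only [Finset.sum_range, Fin.val_injective.extend_apply, initSeg]

namespace GenericTriple

theorem exists_mem_inf_ne_zero (h : GenericTriple E F G) {i j : ℕ} (hij : i + j + 1 = d) :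
    ∃ x ∈ E (i + 1) ⊓ F (j + 1), x ≠ 0 := by
  refine Submodule.exists_mem_ne_zero_of_ne_bot fun hbot => ?_
  have hdim := Submodule.finrank_add_finrank_le_of_disjoint (disjoint_iff.2 hbot)
  rw [h.isFlag_left.2 _ (by omega), h.isFlag_mid.2 _ (by omega), finrank_fin_fun] at hdim
  omega

theorem exists_adaptedTo_both (h : GenericTriple E F G) :
    ∃ b, AdaptedTo E b ∧ AdaptedTo F fun i => b (d - 1 - i) := by
  have hex (i) (hi : i < d) := h.exists_mem_inf_ne_zero (i := i) (j := d - 1 - i) (by omega)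
  choose! b hb hb0 using hex
  refine ⟨b, fun i hi => ⟨(hb i hi).1, fun hE => hb0 i hi ?_⟩,
    fun i hi => ⟨?_, fun hF => hb0 (d - 1 - i) (by omega) ?_⟩⟩
  · exact Submodule.disjoint_def.1 (h.disjoint_left_mid (by omega)) _ hE (hb i hi).2
  · simpa [show d - 1 - (d - 1 - i) = i by omega] using (hb (d - 1 - i) (by omega)).2
  · exact Submodule.disjoint_def.1 (h.disjoint_left_mid (by omega)) _ (hb _ (by omega)).1 hF

theorem coeff_ne_zero (h : GenericTriple E F G) {b : ℕ → Vec d} (hbE : AdaptedTo E b)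
    (hbF : AdaptedTo F fun i => b (d - 1 - i)) {c : ℕ → ℝ}
    (hmem : ∑ i ∈ Finset.range d, c i • b i ∈ G 1) (hne : ∑ i ∈ Finset.range d, c i • b i ≠ 0) :
    ∀ i < d, c i ≠ 0 := by
  intro i hi hci
  have hsum : ∑ j ∈ Finset.range d, c j • b j ∈ E i ⊔ F (d - 1 - i) := by
    refine sum_mem fun j hj => ?_
    have hjd := Finset.mem_range.1 hj
    obtain hji | rfl | hij := lt_trichotomy j i
    · exact Submodule.mem_sup_left (Submodule.smul_mem _ _ (h.isFlag_left.1 hji (hbE j hjd).1))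
    · rw [hci, zero_smul]
      exact zero_mem _
    · refine Submodule.mem_sup_right (Submodule.smul_mem _ _ ?_)
      have hbj := (hbF (d - 1 - j) (by omega)).1
      simp only [show d - 1 - (d - 1 - j) = j by omega] at hbj
      exact h.isFlag_mid.1 (by omega) hbj
  exact hne (Submodule.disjoint_def.1 (h.disjoint (by omega)) _ hsum hmem)

theorem exists_frame (h : GenericTriple E F G) :
    ∃ b, AdaptedTo E b ∧ AdaptedTo F (fun i => b (d - 1 - i)) ∧
      G 1 = Submodule.span ℝ {∑ i ∈ Finset.range d, b i} := by
  obtain ⟨b, hbE, hbF⟩ := h.exists_adaptedTo_both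
  obtain rfl | hd := d.eq_zero_or_pos
  · exact ⟨b, hbE, hbF, Subsingleton.elim _ _⟩
  obtain ⟨v, hv⟩ := h.isFlag_right.exists_adaptedTo
  obtain ⟨hv1, hv0⟩ := hv.apply_zero h.isFlag_right hd
  obtain ⟨c, hc⟩ := hbE.exists_sum_eq h.isFlag_left (v 0)
  have hc0 := h.coeff_ne_zero hbE hbF (hc ▸ hv1) (hc ▸ hv0)
  refine ⟨fun i => c i • b i, hbE.smul hc0, hbF.smul fun i hi => hc0 _ (by omega), ?_⟩
  rw [hc, h.isFlag_right.apply_one_eq_span hd hv1 hv0]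

theorem exists_linearEquiv (h : GenericTriple E F G) (h' : GenericTriple E' F' G') :
    ∃ T : Vec d ≃ₗ[ℝ] Vec d, EqOn (mapFlag T E) E' (Iic d) ∧ EqOn (mapFlag T F) F' (Iic d) ∧
      mapFlag T G 1 = G' 1 := by
  obtain ⟨b, hbE, hbF, hbG⟩ := h.exists_frame
  obtain ⟨b', hbE', hbF', hbG'⟩ := h'.exists_frame
  obtain ⟨T, hT⟩ := hbE.exists_linearEquiv h.isFlag_left hbE' h'.isFlag_left
  refine ⟨T, hbE.mapFlag_eqOn h.isFlag_left hbE' h'.isFlag_left hT,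
    hbF.mapFlag_eqOn h.isFlag_mid hbF' h'.isFlag_mid fun i hi => hT _ (by omega), ?_⟩
  have hsum : T (∑ i ∈ Finset.range d, b i) = ∑ i ∈ Finset.range d, b' i := by
    rw [map_sum]
    exact Finset.sum_congr rfl fun i hi => hT i (Finset.mem_range.1 hi)
  rw [mapFlag, hbG, hbG', Submodule.map_span, image_singleton, LinearEquiv.coe_coe, hsum]

end GenericTriple

end Frame

theorem stmt16_general {d : ℕ} {E F G H E' F' G' H' : ℕ → Submodule ℝ (Vec d)}
    (hEFG : GenericTriple E F G) (hEFH : GenericTriple E F H) (hEGH : GenericTriple E G H)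
    (hEFG' : GenericTriple E' F' G') (hEFH' : GenericTriple E' F' H')
    (hEGH' : GenericTriple E' G' H') (hX : SameTripleRatios E F G E' F' G')
    (hY : SameTripleRatios E H F E' H' F') (hZ : SameDoubleRatios E F G H E' F' G' H') :
    ∃ T : Vec d ≃ₗ[ℝ] Vec d, ∀ i ≤ d, mapFlag T E i = E' i ∧ mapFlag T F i = F' i ∧
      mapFlag T G i = G' i ∧ mapFlag T H i = H' i := by
  obtain ⟨T, hE, hF, hG1⟩ := hEFG.exists_linearEquiv hEFG'
  have hG := (hX.map T).eqOn (hEFG.map T) hEFG' hE hF hG1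
  have hF1 : mapFlag T F 1 = F' 1 := by
    obtain rfl | hd := d.eq_zero_or_pos
    · exact Subsingleton.elim _ _
    · exact hF hd
  have hH1 := (hZ.map T).apply_one_eq (hEFG.swap.map T) (hEGH.map T) hEGH' hE hG hF1
  have hH := (hY.swap.map T).eqOn (hEFH.map T) hEFH' hE hF hH1
  exact ⟨T, fun i hi => ⟨hE hi, hF hi, hG hi, hH hi⟩⟩

/-- Theorem 2.8 (Fock–Goncharov): a configuration of four maximum span flags
`(E,F,G,H)` is determined by the triple ratios `X_{a,b,c}(E,F,G)`,
`X_{a,b,c}(E,H,F)` for `(a,b,c) ∈ Θ°_d` and the double ratios `Z_i(E,F,G,H)` for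
`0 < i < d`: two quadruples with the same invariants differ by an element of
`GL(d,ℝ)`. -/
theorem stmt16 {d : ℕ} (hd : 3 ≤ d)
    (E F G H E' F' G' H' : ℕ → Submodule ℝ (Vec d))
    (hE : IsFlag E) (hF : IsFlag F) (hG : IsFlag G) (hH : IsFlag H)
    (hE' : IsFlag E') (hF' : IsFlag F') (hG' : IsFlag G') (hH' : IsFlag H')
    (hmax : MaxSpan ![E, F, G, H]) (hmax' : MaxSpan ![E', F', G', H'])
    (htripleEFG : ∀ a b c : ℕ, 1 ≤ a → 1 ≤ b → 1 ≤ c → a + b + c = d →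
      ∀ e f g e' f' g' : (k : ℕ) → Fin k → Vec d,
        ChoiceFor E e → ChoiceFor F f → ChoiceFor G g →
        ChoiceFor E' e' → ChoiceFor F' f' → ChoiceFor G' g' →
        tripleRatio a b c e f g = tripleRatio a b c e' f' g')
    (htripleEHF : ∀ a b c : ℕ, 1 ≤ a → 1 ≤ b → 1 ≤ c → a + b + c = d →
      ∀ e h f e' h' f' : (k : ℕ) → Fin k → Vec d,
        ChoiceFor E e → ChoiceFor H h → ChoiceFor F f →
        ChoiceFor E' e' → ChoiceFor H' h' → ChoiceFor F' f' →
        tripleRatio a b c e h f = tripleRatio a b c e' h' f')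
    (hdouble : ∀ i : ℕ, 1 ≤ i → i < d →
      ∀ (e g e' g' : (k : ℕ) → Fin k → Vec d) (f1 h1 f1' h1' : Vec d),
        ChoiceFor E e → ChoiceFor G g → ChoiceFor E' e' → ChoiceFor G' g' →
        f1 ∈ F 1 → f1 ≠ 0 → h1 ∈ H 1 → h1 ≠ 0 →
        f1' ∈ F' 1 → f1' ≠ 0 → h1' ∈ H' 1 → h1' ≠ 0 →
        doubleRatio i e g f1 h1 = doubleRatio i e' g' f1' h1') :
    ∃ T : Vec d ≃ₗ[ℝ] Vec d, ∀ i, i ≤ d →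
      (E i).map (T : Vec d →ₗ[ℝ] Vec d) = E' i ∧
      (F i).map (T : Vec d →ₗ[ℝ] Vec d) = F' i ∧
      (G i).map (T : Vec d →ₗ[ℝ] Vec d) = G' i ∧
      (H i).map (T : Vec d →ₗ[ℝ] Vec d) = H' i := by
  have h (i j k) := hmax.genericTriple (i := i) (j := j) (k := k)
    (by simp [Fin.forall_fin_succ, hE, hF, hG, hH])
  have h' (i j k) := hmax'.genericTriple (i := i) (j := j) (k := k)
    (by simp [Fin.forall_fin_succ, hE', hF', hG', hH'])
  exact stmt16_general (h 0 1 2 (by decide)) (h 0 1 3 (by decide)) (h 0 2 3 (by decide))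
    (h' 0 1 2 (by decide)) (h' 0 1 3 (by decide)) (h' 0 2 3 (by decide))
    htripleEFG htripleEHF hdouble
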